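/- Let N ≥ 1 be an integer, λ₂ ∈ (0,1), λ ≥ max(1, L²) with L > 0, β ≥ 0, and d ≥ 1. For s ≥ 1 set q(s) = ⌈log(2Ns)/√(2·log(1/λ₂))⌉. Let x_1, …, x_S ∈ ℝ^d with ‖x_s‖₂ ≤ L, define V_0 = λI and V_s = V_{s-1} + x_s x_sᵀ, and let ρ_1, …, ρ_S be nonnegative reals with ρ_s ≤ 2β·‖x_s‖_{V_{s-1}^{-1}} for every s. If S ≤ T, then the communication-weighted regret satisfies Σ_{s=1}^S (1 + q(s))·ρ_s ≤ (1 + ⌈log(2NT)/√(2·log(1/λ₂))⌉)·2β·√(2·S·d·log(1 + SL²/(dλ))). -/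

import Mathlib

open Matrix

/-- The weighted norm `‖x‖_V = √(xᵀ V x)` associated with a matrix `V`. -/
noncomputable def wNorm {d : ℕ} (V : Matrix (Fin d) (Fin d) ℝ) (x : Fin d → ℝ) : ℝ :=
  Real.sqrt (x ⬝ᵥ V.mulVec x)

/-- The Euclidean norm `‖x‖₂ = √(xᵀ x)` on `ℝ^d`. -/
noncomputable def eucNorm {d : ℕ} (x : Fin d → ℝ) : ℝ :=
  Real.sqrt (x ⬝ᵥ x)

lemma aux_posDef {d : ℕ} {lam : ℝ} (hlam : 0 < lam) (x : ℕ → Fin d → ℝ)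
    (V : ℕ → Matrix (Fin d) (Fin d) ℝ)
    (hV0 : V 0 = lam • (1 : Matrix (Fin d) (Fin d) ℝ))
    (hVk : ∀ s, V (s + 1) = V s + Matrix.vecMulVec (x (s + 1)) (x (s + 1))) (s : ℕ) :
    (V s).PosDef := by
  induction s with
  | zero => rw [hV0]; exact Matrix.PosDef.one.smul hlam
  | succ s ih =>
    rw [hVk]
    refine ih.add_posSemidef ?_
    have := Matrix.posSemidef_vecMulVec_self_star (x (s + 1))
    simpa using this

lemma aux_lower {d : ℕ} {lam : ℝ} (x : ℕ → Fin d → ℝ)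
    (V : ℕ → Matrix (Fin d) (Fin d) ℝ)
    (hV0 : V 0 = lam • (1 : Matrix (Fin d) (Fin d) ℝ))
    (hVk : ∀ s, V (s + 1) = V s + Matrix.vecMulVec (x (s + 1)) (x (s + 1))) (s : ℕ)
    (y : Fin d → ℝ) : lam * (y ⬝ᵥ y) ≤ y ⬝ᵥ (V s).mulVec y := by
  induction s with
  | zero => rw [hV0]; simp [Matrix.smul_mulVec, dotProduct_smul]
  | succ s ih =>
    rw [hVk, Matrix.add_mulVec, dotProduct_add, Matrix.vecMulVec_mulVec]
    have : y ⬝ᵥ (MulOpposite.op (x (s+1) ⬝ᵥ y) • x (s+1)) = (x (s+1) ⬝ᵥ y)^2 := by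
      rw [op_smul_eq_smul, dotProduct_smul, dotProduct_comm y, smul_eq_mul, sq]
    rw [this]
    nlinarith [sq_nonneg (x (s+1) ⬝ᵥ y)]

lemma aux_trace {d : ℕ} {lam L : ℝ} (S : ℕ) (x : ℕ → Fin d → ℝ)
    (hx : ∀ s, 1 ≤ s → s ≤ S → x s ⬝ᵥ x s ≤ L ^ 2)
    (V : ℕ → Matrix (Fin d) (Fin d) ℝ)
    (hV0 : V 0 = lam • (1 : Matrix (Fin d) (Fin d) ℝ))
    (hVk : ∀ s, V (s + 1) = V s + Matrix.vecMulVec (x (s + 1)) (x (s + 1))) (s : ℕ)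
    (hs : s ≤ S) : (V s).trace ≤ d * lam + s * L ^ 2 := by
  induction s with
  | zero => rw [hV0]; simp [mul_comm]
  | succ s ih =>
    rw [hVk, Matrix.trace_add, Matrix.trace_vecMulVec]
    have := hx (s+1) (by omega) hs
    have := ih (by omega)
    push_cast
    linarith

lemma aux_u {d : ℕ} {lam L : ℝ} (hlam : 0 < lam) (hL : L ^ 2 ≤ lam)
    (V : Matrix (Fin d) (Fin d) ℝ) (hV : V.PosDef)
    (hlow : ∀ y : Fin d → ℝ, lam * (y ⬝ᵥ y) ≤ y ⬝ᵥ V.mulVec y)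
    (x : Fin d → ℝ) (hx : x ⬝ᵥ x ≤ L ^ 2) :
    0 ≤ x ⬝ᵥ V⁻¹.mulVec x ∧ x ⬝ᵥ V⁻¹.mulVec x ≤ 1 := by
  have h0 : 0 ≤ x ⬝ᵥ V⁻¹.mulVec x := by
    have := hV.inv.posSemidef.dotProduct_mulVec_nonneg x
    simpa using this
  refine ⟨h0, ?_⟩
  have hdet : IsUnit V.det := hV.det_pos.ne'.isUnit
  have h1 := hlow (V⁻¹.mulVec x)
  rw [Matrix.mulVec_mulVec, Matrix.mul_nonsing_inv _ hdet, Matrix.one_mulVec,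
    dotProduct_comm _ x] at h1
  set y := V⁻¹.mulVec x
  have hcs : (x ⬝ᵥ y) ^ 2 ≤ (x ⬝ᵥ x) * (y ⬝ᵥ y) := by
    have := Finset.sum_mul_sq_le_sq_mul_sq Finset.univ x y
    simpa [dotProduct, sq] using this
  have hyy : 0 ≤ y ⬝ᵥ y := by
    simp only [dotProduct]; exact Finset.sum_nonneg fun i _ => mul_self_nonneg _
  have h2 : (x ⬝ᵥ x) * (y ⬝ᵥ y) ≤ x ⬝ᵥ y :=
    (mul_le_mul_of_nonneg_right (hx.trans hL) hyy).trans h1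
  nlinarith

lemma aux_det {d : ℕ} (V : Matrix (Fin d) (Fin d) ℝ) (hV : V.PosDef) (x : Fin d → ℝ) :
    (V + Matrix.vecMulVec x x).det = V.det * (1 + x ⬝ᵥ V⁻¹.mulVec x) := by
  have hdet : IsUnit V.det := hV.det_pos.ne'.isUnit
  rw [Matrix.vecMulVec_eq Unit, Matrix.det_add_replicateCol_mul_replicateRow hdet]
  congr 2
  simp [Matrix.mul_apply, dotProduct, Matrix.mulVec, Finset.sum_mul, Finset.mul_sum]
  rw [Finset.sum_comm]
  simp [mul_assoc]

lemma aux_logdet {d : ℕ} (V : Matrix (Fin d) (Fin d) ℝ) (hV : V.PosDef) (c : ℝ) (hc : 0 < c)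
    (htr : V.trace ≤ d * c) : Real.log V.det ≤ d * Real.log c := by
  have hd := hV.1.det_eq_prod_eigenvalues
  have ht := hV.1.trace_eq_sum_eigenvalues
  simp only [RCLike.ofReal_real_eq_id, id] at hd ht
  rw [hd, Real.log_prod (fun i _ => (hV.eigenvalues_pos i).ne')]
  have hi : ∀ i, Real.log (hV.1.eigenvalues i) ≤ hV.1.eigenvalues i / c - 1 + Real.log c := by
    intro i
    have hp := hV.eigenvalues_pos i
    have := Real.log_le_sub_one_of_pos (div_pos hp hc)
    rw [Real.log_div hp.ne' hc.ne'] at this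
    linarith
  refine (Finset.sum_le_sum fun i _ => hi i).trans ?_
  rw [Finset.sum_add_distrib, Finset.sum_sub_distrib, ← Finset.sum_div, ← ht]
  simp
  rwa [div_le_iff₀ hc]

lemma aux_log {u : ℝ} (h0 : 0 ≤ u) (h1 : u ≤ 1) : u ≤ 2 * Real.log (1 + u) := by
  have h := Real.one_sub_inv_le_log_of_pos (show 0 < 1 + u by linarith)
  have : u / 2 ≤ 1 - (1 + u)⁻¹ := by
    have : 1 - (1 + u)⁻¹ = u / (1 + u) := by field_simp; ring
    rw [this]
    exact div_le_div_of_nonneg_left h0 (by linarith) (by linarith)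
  linarith

/-- deterministic core of Theorem 2 of the paper. With
communication lengths `q s = ⌈log (2 N s) / √(2 log (1/λ₂))⌉`, actions `x_s` with
`‖x_s‖₂ ≤ L`, design matrices `V_0 = λI`, `V_s = V_{s-1} + x_s x_sᵀ`, and
instantaneous regrets `0 ≤ ρ_s ≤ 2 β ‖x_s‖_{V_{s-1}⁻¹}`, if `S ≤ T` then the
communication-weighted regret satisfies
`∑_{s=1}^S (1 + q s) ρ_s ≤ (1 + ⌈log (2 N T)/√(2 log (1/λ₂))⌉) 2 β
  √(2 S d log (1 + S L²/(d λ)))`. -/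
theorem stmt_17 {d : ℕ} (hd : 1 ≤ d) (N : ℕ) (hN : 1 ≤ N) (lam2 : ℝ)
    (hlam2_pos : 0 < lam2) (hlam2_lt : lam2 < 1)
    (L lam β : ℝ) (hL : 0 < L) (hlam : max 1 (L ^ 2) ≤ lam) (hβ : 0 ≤ β)
    (q : ℕ → ℕ)
    (hq : ∀ s : ℕ, q s = ⌈Real.log (2 * N * s) / Real.sqrt (2 * Real.log (1 / lam2))⌉₊)
    (S T : ℕ) (hST : S ≤ T)
    (x : ℕ → Fin d → ℝ) (hx : ∀ s, 1 ≤ s → s ≤ S → eucNorm (x s) ≤ L)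
    (V : ℕ → Matrix (Fin d) (Fin d) ℝ)
    (hV0 : V 0 = lam • (1 : Matrix (Fin d) (Fin d) ℝ))
    (hVk : ∀ s, V (s + 1) = V s + Matrix.vecMulVec (x (s + 1)) (x (s + 1)))
    (ρ : ℕ → ℝ) (hρ_nonneg : ∀ s, 1 ≤ s → s ≤ S → 0 ≤ ρ s)
    (hρ : ∀ s, 1 ≤ s → s ≤ S → ρ s ≤ 2 * β * wNorm (V (s - 1))⁻¹ (x s)) :
    (∑ s ∈ Finset.Icc 1 S, ((1 + q s : ℕ) : ℝ) * ρ s) ≤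
      (1 + (⌈Real.log (2 * N * T) / Real.sqrt (2 * Real.log (1 / lam2))⌉₊ : ℝ)) *
        (2 * β) * Real.sqrt (2 * S * d * Real.log (1 + S * L ^ 2 / (d * lam))) := by
  have hlam0 : 0 < lam := lt_of_lt_of_le one_pos ((le_max_left _ _).trans hlam)
  have hLl : L ^ 2 ≤ lam := (le_max_right _ _).trans hlam
  have hd0 : (0 : ℝ) < d := by exact_mod_cast hd
  have hx2 : ∀ s, 1 ≤ s → s ≤ S → x s ⬝ᵥ x s ≤ L ^ 2 := fun s h1 h2 =>
    (Real.sqrt_le_left hL.le).1 (hx s h1 h2)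
  have hPD := aux_posDef hlam0 x V hV0 hVk
  have hu : ∀ s, 1 ≤ s → s ≤ S →
      0 ≤ x s ⬝ᵥ (V (s - 1))⁻¹.mulVec (x s) ∧ x s ⬝ᵥ (V (s - 1))⁻¹.mulVec (x s) ≤ 1 :=
    fun s h1 h2 => aux_u hlam0 hLl _ (hPD _) (aux_lower x V hV0 hVk _) _ (hx2 s h1 h2)
  have hsum : ∀ n, n ≤ S → ∑ s ∈ Finset.Icc 1 n, x s ⬝ᵥ (V (s - 1))⁻¹.mulVec (x s) ≤
      2 * (Real.log (V n).det - d * Real.log lam) := by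
    intro n
    induction n with
    | zero => intro _; simp [hV0, Matrix.det_smul]
    | succ n ih =>
      intro hn
      rw [Finset.sum_Icc_succ_top (by omega)]
      have h1 := ih (by omega)
      obtain ⟨h2, h3⟩ := hu (n + 1) (by omega) hn
      have h4 := aux_log h2 h3
      simp only [Nat.add_sub_cancel] at h2 h3 h4 ⊢
      rw [hVk n, aux_det _ (hPD n), Real.log_mul (hPD n).det_pos.ne' (by linarith)]
      linarith
  have hc : 0 < 1 + S * L ^ 2 / (d * lam) := by positivity
  have hfin : ∑ s ∈ Finset.Icc 1 S, x s ⬝ᵥ (V (s - 1))⁻¹.mulVec (x s) ≤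
      2 * (d * Real.log (1 + S * L ^ 2 / (d * lam))) := by
    refine (hsum S le_rfl).trans ?_
    have := aux_logdet (V S) (hPD S) (lam * (1 + S * L ^ 2 / (d * lam))) (by positivity) (by
      refine (aux_trace S x hx2 V hV0 hVk S le_rfl).trans (le_of_eq ?_)
      field_simp)
    rw [Real.log_mul hlam0.ne' hc.ne'] at this
    linarith
  have hnorm : ∑ s ∈ Finset.Icc 1 S, wNorm (V (s - 1))⁻¹ (x s) ≤
      Real.sqrt (2 * S * d * Real.log (1 + S * L ^ 2 / (d * lam))) := by
    apply Real.le_sqrt_of_sq_le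
    have h := sq_sum_le_card_mul_sum_sq (s := Finset.Icc 1 S)
      (f := fun s => wNorm (V (s - 1))⁻¹ (x s))
    have h2 : ∑ s ∈ Finset.Icc 1 S, (wNorm (V (s - 1))⁻¹ (x s)) ^ 2 =
        ∑ s ∈ Finset.Icc 1 S, x s ⬝ᵥ (V (s - 1))⁻¹.mulVec (x s) := by
      refine Finset.sum_congr rfl fun s hs => ?_
      rw [Finset.mem_Icc] at hs
      exact Real.sq_sqrt (hu s hs.1 hs.2).1
    rw [h2] at h
    simp only [Nat.card_Icc, Nat.add_sub_cancel] at h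
    refine h.trans ((mul_le_mul_of_nonneg_left hfin (Nat.cast_nonneg S)).trans (le_of_eq ?_))
    ring
  have hq' : ∀ s, 1 ≤ s → s ≤ S →
      q s ≤ ⌈Real.log (2 * N * T) / Real.sqrt (2 * Real.log (1 / lam2))⌉₊ := by
    intro s h1 h2
    rw [hq]
    have hN' : (0 : ℝ) < N := by exact_mod_cast hN
    have hs' : (0 : ℝ) < s := by exact_mod_cast h1
    have hsT : (s : ℝ) ≤ T := by exact_mod_cast h2.trans hST
    gcongr
  set Q := ⌈Real.log (2 * N * T) / Real.sqrt (2 * Real.log (1 / lam2))⌉₊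
  calc _ ≤ ∑ s ∈ Finset.Icc 1 S, (1 + (Q : ℝ)) * (2 * β) * wNorm (V (s - 1))⁻¹ (x s) := by
        refine Finset.sum_le_sum fun s hs => ?_
        rw [Finset.mem_Icc] at hs
        have h1 : ((1 + q s : ℕ) : ℝ) ≤ 1 + (Q : ℝ) := by
          have := hq' s hs.1 hs.2
          push_cast
          gcongr
        rw [mul_assoc]
        exact mul_le_mul h1 (hρ s hs.1 hs.2) (hρ_nonneg s hs.1 hs.2) (by positivity)
    _ ≤ _ := by
        rw [← Finset.mul_sum]
        exact mul_le_mul_of_nonneg_left hnorm (by positivity)
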